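/- Standard form of a dual socle generator: let k be a field of characteristic zero and (A, 𝔪) a finite local Gorenstein k-algebra of socle degree j with n = h_A(1) = dim_k 𝔪/𝔪². Let Δ be the Hilbert function decomposition of A and set e(i) = Σ_{t=0}^{i} Δ_t(1). Then there exists a polynomial f = f₀ + f₁ + ⋯ + f_j ∈ k[x₁,…,xₙ], with each f_i homogeneous of degree i, such that A ≅ k[y₁,…,yₙ]/Ann(f) as k-algebras and f_i ∈ k[x₁,…,x_{e(j−i)}] (i.e. f_i involves only the first e(j−i) variables) for every i; moreover if j ≥ 2 one can additionally take f₀ = f₁ = 0. -/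

import Mathlib

/-- `dim_k P/(P ∩ Q)`, the `k`-dimension of the image of the submodule `P` in `A/Q`. -/
noncomputable def subquotDim (k : Type*) {A : Type*} [Field k] [CommRing A] [Algebra k A]
    (P Q : Submodule A A) : ℕ :=
  Module.finrank k (↥(P.restrictScalars k) ⧸
    (Submodule.comap (P.restrictScalars k).subtype (Q.restrictScalars k)))

/-- Iarrobino's `A_{m,n} = J^m ∩ (0 : J^n)`, with the convention `J^i = A` for `i ≤ 0`. -/
noncomputable def iaA {A : Type*} [CommRing A] (J : Ideal A) (m : ℕ) (n : ℤ) : Ideal A :=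
  J ^ m ⊓ Submodule.torsionBySet A A ((J ^ n.toNat : Ideal A) : Set A)

/-- `dim_k Q_{m,n}` where `Q_{m,n} = A_{m,n}/(A_{m+1,n} + A_{m,n-1})`. -/
noncomputable def iaQdim (k : Type*) {A : Type*} [Field k] [CommRing A] [Algebra k A]
    (J : Ideal A) (m : ℕ) (n : ℤ) : ℕ :=
  subquotDim k (iaA J m n) (iaA J (m + 1) n ⊔ iaA J m (n - 1))

/-- The Hilbert function decomposition `Δ_s(t) = dim_k Q_{t, j+1-(s+t)}` for `0 ≤ s ≤ j`,
`0 ≤ t ≤ j - s`, and `Δ_s(t) = 0` otherwise. -/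
noncomputable def iaDelta (k : Type*) {A : Type*} [Field k] [CommRing A] [Algebra k A]
    (J : Ideal A) (j s t : ℕ) : ℕ :=
  if s ≤ j ∧ s + t ≤ j then iaQdim k J t ((j : ℤ) + 1 - (s + t)) else 0

/-- The local Hilbert function `h(t) = dim_k J^t/J^(t+1)`. -/
noncomputable def hilbFn (k : Type*) {A : Type*} [Field k] [CommRing A] [Algebra k A]
    (J : Ideal A) (t : ℕ) : ℕ :=
  subquotDim k (J ^ t) (J ^ (t + 1))

/-- The apolarity action of `T = k[y₁,…,yₙ]` on `S = k[x₁,…,xₙ]`, in which `yᵢ` acts as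
`∂/∂xᵢ`. -/
noncomputable def apolar {k : Type*} [CommSemiring k] {n : ℕ}
    (D f : MvPolynomial (Fin n) k) : MvPolynomial (Fin n) k :=
  ∑ a ∈ D.support, ∑ b ∈ f.support,
    MvPolynomial.monomial (b - a)
      (D.coeff a * f.coeff b * ∏ i : Fin n, ((b i).descFactorial (a i) : k))

/-!
Choose `φ : A → k` nonzero on the socle, and generators `y₁, …, yₙ` of `𝔪`. Because every nonzero
ideal of `A` meets the socle, the kernel of `k[y] → A` is the largest ideal on which
`ψ : D ↦ φ (D(y))` vanishes, and in characteristic zero this ideal is `Ann f` for the exponential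
generating series `f = ∑ ψ(yᵃ) xᵃ / a!`.

The shape of `f` is then dictated by the generators. The images of `𝔪 ∩ (0 : 𝔪ᵖ)` in `𝔪/𝔪²` form a
flag whose successive quotients have dimensions `Δ_s(1)`; lifting a basis adapted to this flag, in
reverse order, yields `y_v ∈ (0 : 𝔪ⁱ⁻¹)` for every `v` beyond the first `e(j - i)`, so no monomial
of degree `i` divisible by such a `y_v` contributes to `f`. Finally `1, y₁, …, yₙ` are independent
modulo `𝔪²`, which contains the socle when `j ≥ 2`, so `φ` can be chosen to vanish on them.
-/

section AdaptedFamilies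

variable {k E E' : Type*} [Field k] [AddCommGroup E] [Module k E] [AddCommGroup E'] [Module k E']

lemma exists_linearIndependent_mem_of_lt_finrank {n : ℕ} (W : Fin n → Submodule k E)
    (hW : ∀ i : Fin n, (i : ℕ) < Module.finrank k (W i)) :
    ∃ b : Fin n → E, LinearIndependent k b ∧ ∀ i, b i ∈ W i := by
  induction n with
  | zero => exact ⟨Fin.elim0, linearIndependent_empty_type, fun i => i.elim0⟩
  | succ n ih =>
    obtain ⟨b, hb, hbW⟩ := ih (fun i => W i.castSucc) fun i => hW i.castSucc
    have := FiniteDimensional.span_of_finite k (Set.finite_range b)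
    obtain ⟨x, hxW, hx⟩ : ∃ x ∈ W (Fin.last n), x ∉ Submodule.span k (Set.range b) := by
      by_contra! hle
      have hdim : Module.finrank k (W (Fin.last n)) ≤ n :=
        (Submodule.finrank_mono hle).trans ((finrank_range_le_card b).trans_eq (Fintype.card_fin n))
      exact (hW (Fin.last n)).not_ge hdim
    refine ⟨Fin.snoc b x, linearIndependent_finSnoc.2 ⟨hb, hx⟩, fun i => ?_⟩
    induction i using Fin.lastCases with
    | last => rwa [Fin.snoc_last]
    | cast i => rw [Fin.snoc_castSucc]; exact hbW i

lemma exists_linearIndependent_comp_mem_of_monotone (f : E →ₗ[k] E') {F : ℕ → Submodule k E}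
    (hF : Monotone F) {n P : ℕ} (hn : n ≤ Module.finrank k ((F P).map f)) :
    ∃ y : Fin n → E, LinearIndependent k (f ∘ y) ∧
      ∀ p (i : Fin n), (i : ℕ) < Module.finrank k ((F p).map f) → y i ∈ F p := by
  let first (i : Fin n) : ℕ := sInf {p | (i : ℕ) < Module.finrank k ((F p).map f)}
  have hfirst (i : Fin n) : (i : ℕ) < Module.finrank k ((F (first i)).map f) :=
    Nat.sInf_mem (s := {p | (i : ℕ) < Module.finrank k ((F p).map f)}) ⟨P, i.2.trans_le hn⟩
  obtain ⟨b, hb, hbF⟩ :=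
    exists_linearIndependent_mem_of_lt_finrank (fun i => (F (first i)).map f) hfirst
  choose y hyF hyb using hbF
  obtain rfl : f ∘ y = b := funext hyb
  refine ⟨y, hb, fun p i hi => ?_⟩
  have hle : first i ≤ p := Nat.sInf_le hi
  exact hF hle (hyF i)

end AdaptedFamilies

section HilbertDecomposition

variable {k A : Type*} [Field k] [CommRing A] [Algebra k A]

lemma subquotDim_eq_finrank_map_mkQ (P Q : Submodule A A) :
    subquotDim k P Q =
      Module.finrank k ((P.restrictScalars k).map (Q.restrictScalars k).mkQ) := by
  let f := (Q.restrictScalars k).mkQ ∘ₗ (P.restrictScalars k).subtype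
  have hker : (Q.restrictScalars k).comap (P.restrictScalars k).subtype = LinearMap.ker f := by
    rw [LinearMap.ker_comp, Submodule.ker_mkQ]
  have hrange : LinearMap.range f = (P.restrictScalars k).map (Q.restrictScalars k).mkQ := by
    rw [LinearMap.range_comp, Submodule.range_subtype]
  rw [← hrange]
  exact ((Submodule.quotEquivOfEq _ _ hker).trans f.quotKerEquivRange).finrank_eq

lemma subquotDim_add_finrank_inf [FiniteDimensional k A] (P Q : Submodule A A) :
    subquotDim k P Q + Module.finrank k ((P ⊓ Q).restrictScalars k) =
      Module.finrank k (P.restrictScalars k) := by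
  rw [← Submodule.finrank_quotient_add_finrank
    ((Q.restrictScalars k).comap (P.restrictScalars k).subtype), Submodule.restrictScalars_inf,
    ← Submodule.map_comap_subtype, Submodule.finrank_map_subtype_eq]
  rfl

lemma subquotDim_inf_sup_add_subquotDim [FiniteDimensional k A] {P Q : Submodule A A} (h : Q ≤ P)
    (N : Submodule A A) :
    subquotDim k P (N ⊓ P ⊔ Q) + subquotDim k Q N = subquotDim k P N := by
  have hP := subquotDim_add_finrank_inf (k := k) P N
  have hQ := subquotDim_add_finrank_inf (k := k) Q N
  have hPQ := subquotDim_add_finrank_inf (k := k) P (N ⊓ P ⊔ Q)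
  have hsup := Submodule.finrank_sup_add_finrank_inf_eq
    ((N ⊓ P).restrictScalars k) (Q.restrictScalars k)
  rw [← Submodule.restrictScalars_sup, ← Submodule.restrictScalars_inf,
    inf_assoc, inf_eq_right.2 h, inf_comm N, inf_comm N] at hsup
  rw [inf_eq_right.2 (sup_le inf_le_right h), inf_comm N] at hPQ
  rw [inf_comm N]
  omega

lemma mem_iaA {J : Ideal A} {m : ℕ} {n : ℤ} {x : A} :
    x ∈ iaA J m n ↔ x ∈ J ^ m ∧ ∀ z ∈ J ^ n.toNat, z * x = 0 := by
  simp [iaA, Submodule.mem_torsionBySet_iff]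

lemma iaA_mono_right (J : Ideal A) (m : ℕ) : Monotone (iaA J m) := fun _ _ hn _ hx =>
  mem_iaA.2 ⟨(mem_iaA.1 hx).1, fun z hz =>
    (mem_iaA.1 hx).2 z (Ideal.pow_le_pow_right (Int.toNat_le_toNat hn) hz)⟩

lemma iaA_succ_left (J : Ideal A) (m : ℕ) (n : ℤ) : iaA J (m + 1) n = J ^ (m + 1) ⊓ iaA J m n := by
  rw [iaA, iaA, ← inf_assoc, inf_eq_left.2 (Ideal.pow_le_pow_right m.le_succ)]

lemma iaA_eq_pow {J : Ideal A} {j m : ℕ} {n : ℤ} (hJ : J ^ (j + 1) = ⊥) (hn : (j : ℤ) + 1 ≤ m + n) :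
    iaA J m n = J ^ m := by
  refine le_antisymm inf_le_left fun x hx => mem_iaA.2 ⟨hx, fun z hz => ?_⟩
  have hzx : z * x ∈ J ^ (n.toNat + m) := by
    rw [pow_add]
    exact Ideal.mul_mem_mul hz hx
  have hle : J ^ (n.toNat + m) ≤ J ^ (j + 1) := Ideal.pow_le_pow_right (by omega)
  simpa only [hJ, Ideal.mem_bot] using hle hzx

lemma iaQdim_add_subquotDim [FiniteDimensional k A] (J : Ideal A) (m : ℕ) (n : ℤ) :
    iaQdim k J m n + subquotDim k (iaA J m (n - 1)) (J ^ (m + 1)) =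
      subquotDim k (iaA J m n) (J ^ (m + 1)) := by
  rw [iaQdim, iaA_succ_left]
  exact subquotDim_inf_sup_add_subquotDim (iaA_mono_right J m (by omega)) _

lemma sum_iaDelta_add_subquotDim [FiniteDimensional k A] {J : Ideal A} {j : ℕ}
    (hJ : J ^ (j + 1) = ⊥) {r t : ℕ} (hrt : r + t ≤ j + 1) :
    ∑ s ∈ Finset.range r, iaDelta k J j s t +
      subquotDim k (iaA J t ((j : ℤ) + 1 - (r + t))) (J ^ (t + 1)) = hilbFn k J t := by
  induction r with
  | zero =>
    rw [iaA_eq_pow hJ (by omega), Finset.sum_range_zero, zero_add, hilbFn]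
  | succ r ih =>
    have hnext : (j : ℤ) + 1 - ((r + 1 : ℕ) + t) = (j : ℤ) + 1 - (r + t) - 1 := by omega
    rw [← ih (by omega), Finset.sum_range_succ, iaDelta, if_pos (by omega), hnext, add_assoc,
      iaQdim_add_subquotDim]

end HilbertDecomposition

section Generators

variable {k A : Type*} [Field k] [CommRing A] [Algebra k A]

lemma exists_adapted_generators [FiniteDimensional k A] {J : Ideal A} {j : ℕ}
    (hJ : J ^ (j + 1) = ⊥) :
    ∃ y : Fin (hilbFn k J 1) → A,
      LinearIndependent k (((J ^ 2).restrictScalars k).mkQ ∘ y) ∧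
      ∀ p ≤ j, ∀ v : Fin (hilbFn k J 1),
        ∑ t ∈ Finset.range (j - p), iaDelta k J j t 1 ≤ v → y v ∈ iaA J 1 p := by
  let F (p : ℕ) : Submodule k A := (iaA J 1 p).restrictScalars k
  have hFmono : Monotone F := fun p q hpq => iaA_mono_right J 1 (Int.ofNat_le.2 hpq)
  have hsum (p : ℕ) (hp : p ≤ j) : ∑ t ∈ Finset.range (j - p), iaDelta k J j t 1 +
      Module.finrank k ((F p).map ((J ^ 2).restrictScalars k).mkQ) = hilbFn k J 1 := by
    have hpq : (p : ℤ) = j + 1 - ((j - p : ℕ) + (1 : ℕ)) := by omega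
    rw [← subquotDim_eq_finrank_map_mkQ, hpq]
    exact sum_iaDelta_add_subquotDim hJ (by omega)
  have hdim : hilbFn k J 1 ≤ Module.finrank k ((F j).map ((J ^ 2).restrictScalars k).mkQ) := by
    simpa only [tsub_self, Finset.sum_range_zero, zero_add] using (hsum j le_rfl).ge
  obtain ⟨y, hli, hyF⟩ := exists_linearIndependent_comp_mem_of_monotone _ hFmono hdim
  refine ⟨y ∘ Fin.rev, hli.comp _ Fin.rev_injective, fun p hp v hv => hyF p v.rev ?_⟩
  have := hsum p hp
  rw [Fin.val_rev]
  omega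

lemma restrictScalars_le_span_sup_sq [FiniteDimensional k A] {J : Ideal A}
    {y : Fin (hilbFn k J 1) → A} (hyJ : ∀ v, y v ∈ J)
    (hli : LinearIndependent k (((J ^ 2).restrictScalars k).mkQ ∘ y)) :
    J.restrictScalars k ≤ Submodule.span k (Set.range y) ⊔ (J ^ 2).restrictScalars k := by
  have hspan : Submodule.span k (Set.range y) ≤ J.restrictScalars k :=
    Submodule.span_le.2 (Set.range_subset_iff.2 hyJ)
  have hdim : Module.finrank k ((J.restrictScalars k).map ((J ^ 2).restrictScalars k).mkQ) =
      Module.finrank k ((Submodule.span k (Set.range y)).map ((J ^ 2).restrictScalars k).mkQ) := by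
    rw [Submodule.map_span, ← Set.range_comp, finrank_span_eq_card hli, Fintype.card_fin, hilbFn,
      subquotDim_eq_finrank_map_mkQ, pow_one]
  have heq := Submodule.eq_of_le_of_finrank_eq (Submodule.map_mono hspan) hdim.symm
  calc J.restrictScalars k
      ≤ ((J.restrictScalars k).map ((J ^ 2).restrictScalars k).mkQ).comap _ :=
        Submodule.le_comap_map _ _
    _ = _ := by rw [← heq, Submodule.comap_map_mkQ, sup_comm]

lemma le_span_range_of_le_span_sup_sq [IsNoetherianRing A] {ι : Type*} {J : Ideal A}
    (hJ : J ≤ Ideal.jacobson ⊥) {y : ι → A}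
    (hy : J.restrictScalars k ≤ Submodule.span k (Set.range y) ⊔ (J ^ 2).restrictScalars k) :
    J ≤ Ideal.span (Set.range y) := by
  refine Submodule.le_of_le_smul_of_le_jacobson_bot (IsNoetherian.noetherian J) hJ fun x hx => ?_
  obtain ⟨w, hw, z, hz, rfl⟩ := Submodule.mem_sup.1 (hy hx)
  rw [smul_eq_mul, ← pow_two]
  exact Submodule.add_mem_sup (Submodule.span_le_restrictScalars k A _ hw) hz

lemma aeval_surjective_of_le_span_range {ι : Type*} {J : Ideal A} (hJ : IsNilpotent J)
    (hres : ∀ a : A, ∃ c : k, a - algebraMap k A c ∈ J) {y : ι → A} (hyJ : ∀ v, y v ∈ J)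
    (hgen : J ≤ Ideal.span (Set.range y)) :
    Function.Surjective (MvPolynomial.aeval (R := k) y) := by
  have approx (i : ℕ) : ∀ a : A, ∃ p : MvPolynomial ι k, a - MvPolynomial.aeval y p ∈ J ^ i := by
    induction i with
    | zero => exact fun a => ⟨0, by simp⟩
    | succ i ih =>
      intro a
      obtain ⟨c, hc⟩ := hres a
      obtain ⟨g, hg⟩ := Finsupp.mem_ideal_span_range_iff_exists_finsupp.1 (hgen hc)
      choose p hp using fun v => ih (g v)
      refine ⟨MvPolynomial.C c + ∑ v ∈ g.support, p v * MvPolynomial.X v, ?_⟩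
      have herr : a - MvPolynomial.aeval y (MvPolynomial.C c +
          ∑ v ∈ g.support, p v * MvPolynomial.X v) =
          ∑ v ∈ g.support, (g v - MvPolynomial.aeval y (p v)) * y v := by
        rw [Finsupp.sum] at hg
        simp only [map_add, map_sum, map_mul, MvPolynomial.aeval_X, MvPolynomial.aeval_C, sub_mul,
          Finset.sum_sub_distrib, hg]
        ring
      rw [herr, pow_succ]
      exact Ideal.sum_mem _ fun v _ => Ideal.mul_mem_mul (hp v) (hyJ v)
  intro a
  obtain ⟨N, hN⟩ := hJ
  obtain ⟨p, hp⟩ := approx N a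
  rw [hN, Ideal.zero_eq_bot, Ideal.mem_bot, sub_eq_zero] at hp
  exact ⟨p, hp.symm⟩

lemma exists_sub_algebraMap_mem_maximalIdeal [IsLocalRing A]
    (hres : Function.Surjective (algebraMap k (IsLocalRing.ResidueField A))) (a : A) :
    ∃ c : k, a - algebraMap k A c ∈ IsLocalRing.maximalIdeal A := by
  obtain ⟨c, hc⟩ := hres (IsLocalRing.residue A a)
  refine ⟨c, ?_⟩
  rw [← IsLocalRing.residue_eq_zero_iff, map_sub, ← hc, sub_eq_zero]
  rfl

lemma aeval_surjective_of_linearIndependent_mkQ_sq [IsLocalRing A] [FiniteDimensional k A]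
    (hres : Function.Surjective (algebraMap k (IsLocalRing.ResidueField A)))
    {y : Fin (hilbFn k (IsLocalRing.maximalIdeal A) 1) → A}
    (hym : ∀ v, y v ∈ IsLocalRing.maximalIdeal A)
    (hli : LinearIndependent k
      (((IsLocalRing.maximalIdeal A ^ 2).restrictScalars k).mkQ ∘ y)) :
    Function.Surjective (MvPolynomial.aeval (R := k) y) := by
  have : IsArtinianRing A := isArtinian_of_tower k inferInstance
  have hnil : IsNilpotent (IsLocalRing.maximalIdeal A) := by
    rw [← IsLocalRing.jacobson_eq_maximalIdeal ⊥ bot_ne_top]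
    exact IsArtinianRing.isNilpotent_jacobson_bot
  exact aeval_surjective_of_le_span_range hnil (exists_sub_algebraMap_mem_maximalIdeal hres) hym
    (le_span_range_of_le_span_sup_sq (IsLocalRing.maximalIdeal_le_jacobson ⊥)
      (restrictScalars_le_span_sup_sq hym hli))

end Generators

section SocleFunctional

variable {k A : Type*} [Field k] [CommRing A] [Algebra k A]

lemma disjoint_span_insert_one_sq {n : ℕ} {J : Ideal A} (hJ : J ≠ ⊤) {y : Fin n → A}
    (hyJ : ∀ v, y v ∈ J) (hli : LinearIndependent k (((J ^ 2).restrictScalars k).mkQ ∘ y)) :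
    Disjoint (Submodule.span k (insert 1 (Set.range y))) ((J ^ 2).restrictScalars k) := by
  have hone : ((J ^ 2).restrictScalars k).mkQ 1 ∉
      Submodule.span k (Set.range (((J ^ 2).restrictScalars k).mkQ ∘ y)) := by
    intro h
    rw [Set.range_comp, ← Submodule.map_span, ← Submodule.mem_comap, Submodule.comap_map_mkQ] at h
    have hle : (J ^ 2).restrictScalars k ⊔ Submodule.span k (Set.range y) ≤ J.restrictScalars k :=
      sup_le (fun _ hx => Ideal.pow_le_self two_ne_zero hx)
        (Submodule.span_le.2 (Set.range_subset_iff.2 hyJ))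
    exact hJ ((Ideal.eq_top_iff_one J).2 (hle h))
  have hcons : LinearIndependent k (((J ^ 2).restrictScalars k).mkQ ∘ Fin.cons 1 y) := by
    rw [Fin.comp_cons]
    exact linearIndependent_finCons.2 ⟨hli, hone⟩
  simpa only [Fin.range_cons, Submodule.ker_mkQ] using Submodule.range_ker_disjoint hcons

lemma exists_functional_ne_zero_of_mem_pow {n j : ℕ} {J : Ideal A} (hJ : J ≠ ⊤) {y : Fin n → A}
    (hyJ : ∀ v, y v ∈ J) (hli : LinearIndependent k (((J ^ 2).restrictScalars k).mkQ ∘ y))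
    {s : A} (hs : s ≠ 0) (hsJ : s ∈ J ^ j) :
    ∃ φ : A →ₗ[k] k, φ s ≠ 0 ∧ (2 ≤ j → φ 1 = 0 ∧ ∀ v, φ (y v) = 0) := by
  by_cases hj : 2 ≤ j
  · have hnot : s ∉ Submodule.span k (insert 1 (Set.range y)) := fun hmem =>
      hs (Submodule.disjoint_def.1 (disjoint_span_insert_one_sq hJ hyJ hli) s hmem
        (Ideal.pow_le_pow_right hj hsJ))
    obtain ⟨φ, hφs, hφ⟩ := Submodule.exists_le_ker_of_notMem hnot
    exact ⟨φ, hφs, fun _ => ⟨hφ (Submodule.subset_span (Set.mem_insert _ _)), fun v =>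
      hφ (Submodule.subset_span (Set.mem_insert_of_mem _ ⟨v, rfl⟩))⟩⟩
  · obtain ⟨φ, hφs, -⟩ := Submodule.exists_le_ker_of_notMem (p := (⊥ : Submodule k A)) hs
    exact ⟨φ, hφs, fun h => absurd h hj⟩

lemma pow_le_torsionBySet {J : Ideal A} {j : ℕ} (hJ : J ^ (j + 1) = ⊥) :
    J ^ j ≤ Submodule.torsionBySet A A (J : Set A) := by
  refine fun s hs => (Submodule.mem_torsionBySet_iff _ _).2 fun ⟨z, hz⟩ => ?_
  have hzs : z * s ∈ J ^ (j + 1) := by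
    rw [pow_succ']
    exact Ideal.mul_mem_mul hz hs
  rwa [hJ, Ideal.mem_bot] at hzs

lemma exists_mul_mem_torsionBySet_of_isNilpotent {J : Ideal A} (hJ : IsNilpotent J) {a : A}
    (ha : a ≠ 0) : ∃ b, a * b ≠ 0 ∧ a * b ∈ Submodule.torsionBySet A A (J : Set A) := by
  classical
  have hkill : ∃ N, ∀ c ∈ J ^ N, a * c = 0 := by
    obtain ⟨N, hN⟩ := hJ
    exact ⟨N, fun c hc => by
      rw [hN, Ideal.zero_eq_bot, Ideal.mem_bot] at hc
      rw [hc, mul_zero]⟩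
  obtain ⟨i, hi⟩ : ∃ i, Nat.find hkill = i + 1 := Nat.exists_eq_succ_of_ne_zero fun h0 =>
    ha (by simpa using (Nat.find_eq_zero hkill).1 h0 1 (by simp))
  have hmin := Nat.find_min hkill (m := i) (by omega)
  push Not at hmin
  obtain ⟨b, hb, hab⟩ := hmin
  refine ⟨b, hab, (Submodule.mem_torsionBySet_iff _ _).2 fun ⟨z, hz⟩ => ?_⟩
  have hbz : b * z ∈ J ^ Nat.find hkill := by
    rw [hi, pow_succ]
    exact Ideal.mul_mem_mul hb hz
  calc z * (a * b) = a * (b * z) := by ring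
    _ = 0 := Nat.find_spec hkill _ hbz

lemma eq_zero_of_forall_apply_mul_eq_zero {J : Ideal A} (hJ : IsNilpotent J)
    (hsoc : Module.finrank k
      ((Submodule.torsionBySet A A (J : Set A)).restrictScalars k) = 1)
    {s : A} (hs : s ∈ Submodule.torsionBySet A A (J : Set A)) {φ : A →ₗ[k] k} (hφ : φ s ≠ 0)
    {a : A} (ha : ∀ b, φ (a * b) = 0) : a = 0 := by
  by_contra hne
  obtain ⟨b, hab, habsoc⟩ := exists_mul_mem_torsionBySet_of_isNilpotent hJ hne
  obtain ⟨c, hc⟩ := (finrank_eq_one_iff_of_nonzero'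
    (⟨a * b, habsoc⟩ : (Submodule.torsionBySet A A (J : Set A)).restrictScalars k)
    (Subtype.coe_ne_coe.1 hab)).1 hsoc ⟨s, hs⟩
  have hcs : c • (a * b) = s := congrArg Subtype.val hc
  exact hφ (by rw [← hcs, map_smul, ha, smul_zero])

end SocleFunctional

section MacaulayDuality

lemma coeff_apolar {k : Type*} [CommSemiring k] {n : ℕ} (D f : MvPolynomial (Fin n) k)
    (c : Fin n →₀ ℕ) :
    (apolar D f).coeff c = ∑ a ∈ D.support, D.coeff a * f.coeff (a + c) *
      ∏ i, (((a + c) i).descFactorial (a i) : k) := by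
  classical
  simp only [apolar, MvPolynomial.coeff_sum, MvPolynomial.coeff_monomial]
  refine Finset.sum_congr rfl fun a _ => ?_
  rw [Finset.sum_eq_single (a + c)]
  · rw [if_pos (add_tsub_cancel_left a c)]
  · intro b _ hb
    split_ifs with hbc
    · have hab : ¬ a ≤ b := fun hab => hb (by rw [← hbc, add_tsub_cancel_of_le hab])
      obtain ⟨i, hi⟩ : ∃ i, b i < a i := by simpa [Finsupp.le_def] using hab
      rw [Finset.prod_eq_zero (Finset.mem_univ i), mul_zero]
      rw [Nat.descFactorial_of_lt hi, Nat.cast_zero]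
    · rfl
  · intro hac
    rw [MvPolynomial.notMem_support_iff.1 hac, mul_zero, zero_mul, ite_self]

variable {k : Type*} [Field k] {n : ℕ} (ψ : MvPolynomial (Fin n) k →ₗ[k] k)

/-- The degree-`i` component `∑_{|a| = i} ψ(yᵃ) xᵃ / a!` of the exponential generating series of a
linear functional `ψ` on `k[y₁,…,yₙ]`: the form of degree `i` in Macaulay's inverse system that
represents `ψ` in degree `i` under the apolarity pairing. -/
noncomputable def dualComponent (i : ℕ) : MvPolynomial (Fin n) k :=
  ∑ a ∈ Finset.univ.finsuppAntidiag i,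
    MvPolynomial.monomial a (ψ (MvPolynomial.monomial a 1) / ∏ v, ((a v).factorial : k))

lemma coeff_dualComponent (i : ℕ) (a : Fin n →₀ ℕ) :
    (dualComponent ψ i).coeff a =
      if a.degree = i then ψ (MvPolynomial.monomial a 1) / ∏ v, ((a v).factorial : k) else 0 := by
  classical
  simp [dualComponent, MvPolynomial.coeff_sum, MvPolynomial.coeff_monomial,
    Finsupp.degree_eq_sum]

lemma isHomogeneous_dualComponent (i : ℕ) : (dualComponent ψ i).IsHomogeneous i := by
  refine MvPolynomial.IsHomogeneous.sum _ _ _ fun a ha => MvPolynomial.isHomogeneous_monomial _ ?_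
  rw [Finsupp.degree_eq_sum]
  exact (Finset.mem_finsuppAntidiag.1 ha).1

variable {ψ}

lemma dualComponent_eq_zero {i : ℕ}
    (hψ : ∀ a : Fin n →₀ ℕ, a.degree = i → ψ (MvPolynomial.monomial a 1) = 0) :
    dualComponent ψ i = 0 := by
  ext a
  rw [coeff_dualComponent, MvPolynomial.coeff_zero]
  split_ifs with ha
  · rw [hψ a ha, zero_div]
  · rfl

lemma dualComponent_zero_eq_zero (hψ : ψ 1 = 0) : dualComponent ψ 0 = 0 :=
  dualComponent_eq_zero fun a ha => by
    rw [(Finsupp.degree_eq_zero_iff a).1 ha]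
    exact hψ

lemma dualComponent_one_eq_zero (hψ : ∀ v, ψ (MvPolynomial.X v) = 0) : dualComponent ψ 1 = 0 :=
  dualComponent_eq_zero fun a ha => by
    obtain ⟨v, rfl⟩ := (Finsupp.sum_eq_one_iff a).1 ha
    exact hψ v

lemma dualComponent_mem_supported {i : ℕ} {s : Set (Fin n)}
    (hψ : ∀ a : Fin n →₀ ℕ, a.degree = i → ∀ v ∈ a.support, v ∉ s →
      ψ (MvPolynomial.monomial a 1) = 0) :
    dualComponent ψ i ∈ MvPolynomial.supported k s := by
  rw [MvPolynomial.mem_supported]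
  intro v hv
  obtain ⟨a, ha, hva⟩ := (MvPolynomial.mem_vars_iff_mem_support v).1 (Finset.mem_coe.1 hv)
  rw [MvPolynomial.mem_support_iff, coeff_dualComponent] at ha
  by_contra hvs
  obtain ⟨hdeg, hne⟩ := ite_ne_right_iff.1 ha
  exact hne (by rw [hψ a hdeg v hva hvs, zero_div])

lemma coeff_sum_dualComponent {j : ℕ}
    (hψ : ∀ a : Fin n →₀ ℕ, j < a.degree → ψ (MvPolynomial.monomial a 1) = 0) (a : Fin n →₀ ℕ) :
    (∑ i ∈ Finset.range (j + 1), dualComponent ψ i).coeff a =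
      ψ (MvPolynomial.monomial a 1) / ∏ v, ((a v).factorial : k) := by
  simp only [MvPolynomial.coeff_sum, coeff_dualComponent, Finset.sum_ite_eq, Finset.mem_range,
    Nat.lt_succ_iff]
  split_ifs with ha
  · rfl
  · rw [hψ a (not_le.1 ha), zero_div]

lemma prod_factorial_mul_prod_descFactorial {ι R : Type*} [Fintype ι] [CommSemiring R]
    (a c : ι →₀ ℕ) :
    (∏ i, ((c i).factorial : R)) * ∏ i, (((a + c) i).descFactorial (a i) : R) =
      ∏ i, (((a + c) i).factorial : R) := by
  rw [← Finset.prod_mul_distrib]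
  refine Finset.prod_congr rfl fun i _ => ?_
  rw [← Nat.cast_mul, Finsupp.add_apply,
    ← Nat.factorial_mul_descFactorial (Nat.le_add_right (a i) (c i)), add_tsub_cancel_left]

variable [CharZero k]

lemma coeff_apolar_sum_dualComponent {j : ℕ}
    (hψ : ∀ a : Fin n →₀ ℕ, j < a.degree → ψ (MvPolynomial.monomial a 1) = 0)
    (D : MvPolynomial (Fin n) k) (c : Fin n →₀ ℕ) :
    (apolar D (∑ i ∈ Finset.range (j + 1), dualComponent ψ i)).coeff c =
      ψ (D * MvPolynomial.monomial c 1) / ∏ v, ((c v).factorial : k) := by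
  have hexpand : D * MvPolynomial.monomial c 1 =
      ∑ a ∈ D.support, D.coeff a • MvPolynomial.monomial (a + c) (1 : k) := by
    conv_lhs => rw [D.as_sum, Finset.sum_mul]
    simp only [MvPolynomial.monomial_mul, MvPolynomial.smul_monomial, smul_eq_mul, mul_one]
  rw [coeff_apolar, hexpand, map_sum, Finset.sum_div]
  refine Finset.sum_congr rfl fun a _ => ?_
  have hfact : ∏ i, (((a + c) i).factorial : k) ≠ 0 :=
    Finset.prod_ne_zero_iff.2 fun i _ => Nat.cast_ne_zero.2 (Nat.factorial_ne_zero _)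
  rw [coeff_sum_dualComponent hψ, map_smul, smul_eq_mul]
  rw [← prod_factorial_mul_prod_descFactorial] at hfact ⊢
  have hc := left_ne_zero_of_mul hfact
  have hdesc := right_ne_zero_of_mul hfact
  field_simp

lemma apolar_sum_dualComponent_eq_zero_iff {j : ℕ}
    (hψ : ∀ a : Fin n →₀ ℕ, j < a.degree → ψ (MvPolynomial.monomial a 1) = 0)
    (D : MvPolynomial (Fin n) k) :
    apolar D (∑ i ∈ Finset.range (j + 1), dualComponent ψ i) = 0 ↔ ∀ p, ψ (D * p) = 0 := by
  have hfact (c : Fin n →₀ ℕ) : ∏ v, ((c v).factorial : k) ≠ 0 :=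
    Finset.prod_ne_zero_iff.2 fun v _ => Nat.cast_ne_zero.2 (Nat.factorial_ne_zero _)
  have hmonomials : apolar D (∑ i ∈ Finset.range (j + 1), dualComponent ψ i) = 0 ↔
      ∀ c, ψ (D * MvPolynomial.monomial c 1) = 0 := by
    simp only [MvPolynomial.ext_iff, coeff_apolar_sum_dualComponent hψ, MvPolynomial.coeff_zero,
      div_eq_zero_iff, hfact, or_false]
  rw [hmonomials]
  refine ⟨fun h p => ?_, fun h c => h _⟩
  have hlin : ψ ∘ₗ LinearMap.mulLeft k D = 0 :=
    (MvPolynomial.basisMonomials (Fin n) k).ext fun c => by simpa using h c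
  exact LinearMap.congr_fun hlin p

end MacaulayDuality

section MonomialEvaluation

variable {k A σ : Type*} [CommSemiring k] [CommRing A] [Algebra k A] {J : Ideal A} {y : σ → A}

lemma aeval_monomial_one_mem_pow_degree (hyJ : ∀ v, y v ∈ J) (a : σ →₀ ℕ) :
    MvPolynomial.aeval y (MvPolynomial.monomial a (1 : k)) ∈ J ^ a.degree := by
  rw [MvPolynomial.aeval_monomial, map_one, one_mul, Finsupp.degree_apply,
    ← Finset.prod_pow_eq_pow_sum]
  exact Ideal.prod_mem_prod fun v _ => Ideal.pow_mem_pow (hyJ v) _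

lemma aeval_monomial_one_eq_zero_of_lt_degree {j : ℕ} (hJ : J ^ (j + 1) = ⊥)
    (hyJ : ∀ v, y v ∈ J) {a : σ →₀ ℕ} (ha : j < a.degree) :
    MvPolynomial.aeval y (MvPolynomial.monomial a (1 : k)) = 0 := by
  have hmem := Ideal.pow_le_pow_right ha (aeval_monomial_one_mem_pow_degree (k := k) hyJ a)
  rwa [hJ, Ideal.mem_bot] at hmem

lemma aeval_monomial_one_eq_zero_of_mem_iaA (hyJ : ∀ v, y v ∈ J) {a : σ →₀ ℕ} {v : σ}
    (hva : v ∈ a.support) {m : ℕ} (hyv : y v ∈ iaA J m ((a.degree - 1 : ℕ) : ℤ)) :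
    MvPolynomial.aeval y (MvPolynomial.monomial a (1 : k)) = 0 := by
  obtain ⟨b, rfl⟩ : ∃ b, a = b + Finsupp.single v 1 :=
    ⟨a - Finsupp.single v 1, (tsub_add_cancel_of_le (Finsupp.single_le_iff.2
      (Nat.one_le_iff_ne_zero.2 (Finsupp.mem_support_iff.1 hva)))).symm⟩
  have hsplit : MvPolynomial.monomial (b + Finsupp.single v 1) (1 : k) =
      MvPolynomial.monomial b 1 * MvPolynomial.X v := by
    rw [MvPolynomial.X, MvPolynomial.monomial_mul, one_mul]
  rw [hsplit, map_mul, MvPolynomial.aeval_X]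
  refine (mem_iaA.1 hyv).2 _ ?_
  simpa using aeval_monomial_one_mem_pow_degree hyJ b

end MonomialEvaluation

section ApolarAlgebra

variable {k A : Type*} [Field k] [CommRing A] [Algebra k A] {n j : ℕ} {J : Ideal A}
  {y : Fin n → A} (φ : A →ₗ[k] k)

lemma dualComponent_comp_aeval_mem_supported (hJ : J ^ (j + 1) = ⊥) (hyJ : ∀ v, y v ∈ J)
    {e : ℕ → ℕ} (hy : ∀ p ≤ j, ∀ v : Fin n, e (j - p) ≤ v → y v ∈ iaA J 1 p) (i : ℕ) :
    dualComponent (φ ∘ₗ (MvPolynomial.aeval y).toLinearMap) i ∈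
      MvPolynomial.supported k {v : Fin n | (v : ℕ) < e (j - i + 1)} := by
  refine dualComponent_mem_supported fun a ha v hva hv => ?_
  have hmonomial : MvPolynomial.aeval y (MvPolynomial.monomial a (1 : k)) = 0 := by
    rcases lt_or_ge j i with hji | hij
    · exact aeval_monomial_one_eq_zero_of_lt_degree hJ hyJ (ha ▸ hji)
    · have hi : 0 < i := by
        rw [← ha, pos_iff_ne_zero, Ne, Finsupp.degree_eq_zero_iff]
        rintro rfl
        simp at hva
      have hindex : j - (i - 1) = j - i + 1 := by omega
      exact aeval_monomial_one_eq_zero_of_mem_iaA hyJ hva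
        (hy (a.degree - 1) (by omega) v (by rw [ha, hindex]; exact not_lt.1 hv))
  rw [LinearMap.comp_apply, AlgHom.toLinearMap_apply, hmonomial, map_zero]

lemma apolar_dualComponent_comp_aeval_eq_zero_iff [CharZero k] {φ : A →ₗ[k] k}
    (hJ : J ^ (j + 1) = ⊥) (hyJ : ∀ v, y v ∈ J)
    (hsurj : Function.Surjective (MvPolynomial.aeval (R := k) y))
    (hφ : ∀ a, (∀ b, φ (a * b) = 0) → a = 0) (D : MvPolynomial (Fin n) k) :
    apolar D (∑ i ∈ Finset.range (j + 1),
      dualComponent (φ ∘ₗ (MvPolynomial.aeval y).toLinearMap) i) = 0 ↔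
      MvPolynomial.aeval y D = 0 := by
  rw [apolar_sum_dualComponent_eq_zero_iff fun a ha => by
    rw [LinearMap.comp_apply, AlgHom.toLinearMap_apply,
      aeval_monomial_one_eq_zero_of_lt_degree hJ hyJ ha, map_zero]]
  simp only [LinearMap.comp_apply, AlgHom.toLinearMap_apply, map_mul]
  refine ⟨fun h => hφ _ (hsurj.forall.2 h), fun h p => by rw [h, zero_mul, map_zero]⟩

end ApolarAlgebra

/-- **Standard form of a dual socle generator.** Let `k` be a field of
characteristic zero and `(A, 𝔪)` a finite local Gorenstein `k`-algebra of socle degree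
`j` with `n = h_A(1) = dim_k 𝔪/𝔪²`. Let `Δ` be the Hilbert function decomposition of `A`
and `e(i) = Σ_{t=0}^{i} Δ_t(1)`. Then there exists `f = f₀ + f₁ + ⋯ + f_j ∈ k[x₁,…,xₙ]`
with each `f_i` homogeneous of degree `i`, such that `A ≅ k[y₁,…,yₙ]/Ann(f)` as
`k`-algebras and `f_i` involves only the first `e(j-i)` variables, for every `i`;
moreover, if `j ≥ 2` one can additionally take `f₀ = f₁ = 0`. -/
theorem deformations_stmt16 {k A : Type*} [Field k] [CharZero k]
    [CommRing A] [Algebra k A] [IsLocalRing A] [FiniteDimensional k A]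
    -- the residue field A/𝔪 is k
    (hres : Function.Bijective (algebraMap k (IsLocalRing.ResidueField A)))
    -- the socle soc(A) has k-dimension 1 (A is Gorenstein)
    (hsoc : Module.finrank k
      ↥((Submodule.torsionBySet A A
          ((IsLocalRing.maximalIdeal A : Ideal A) : Set A)).restrictScalars k) = 1)
    -- j is the socle degree of A
    (j : ℕ) (hj : IsLocalRing.maximalIdeal A ^ j ≠ ⊥)
    (hj' : IsLocalRing.maximalIdeal A ^ (j + 1) = ⊥)
    -- n = h_A(1) = dim_k 𝔪/𝔪²
    (n : ℕ) (hn : hilbFn k (IsLocalRing.maximalIdeal A) 1 = n) :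
    ∃ fc : ℕ → MvPolynomial (Fin n) k,
      -- fc i is the homogeneous degree-i component f_i of f = f₀ + ⋯ + f_j
      (∀ i : ℕ, (fc i).IsHomogeneous i) ∧
      -- f_i ∈ k[x₁,…,x_{e(j-i)}], where e(i) = Σ_{t=0}^{i} Δ_t(1)
      (∀ i : ℕ, fc i ∈ MvPolynomial.supported k
        {v : Fin n | (v : ℕ) <
          ∑ t ∈ Finset.range (j - i + 1), iaDelta k (IsLocalRing.maximalIdeal A) j t 1}) ∧
      -- if j ≥ 2 then f₀ = f₁ = 0
      (2 ≤ j → fc 0 = 0 ∧ fc 1 = 0) ∧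
      -- A is isomorphic to the apolar algebra of f
      (∃ I : Ideal (MvPolynomial (Fin n) k),
        (I : Set (MvPolynomial (Fin n) k)) =
          {D | apolar D (∑ i ∈ Finset.range (j + 1), fc i) = 0} ∧
        Nonempty ((MvPolynomial (Fin n) k ⧸ I) ≃ₐ[k] A)) := by
  subst hn
  set 𝔪 := IsLocalRing.maximalIdeal A
  obtain ⟨y, hli, hy⟩ := exists_adapted_generators (k := k) hj'
  have hym (v) : y v ∈ 𝔪 := pow_one 𝔪 ▸ (mem_iaA.1 (hy j le_rfl v (by simp))).1
  obtain ⟨s, hsj, hs⟩ := Submodule.exists_mem_ne_zero_of_ne_bot hj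
  obtain ⟨φ, hφs, hφ⟩ := exists_functional_ne_zero_of_mem_pow
    (IsLocalRing.maximalIdeal.isMaximal A).ne_top hym hli hs hsj
  have hsurj := aeval_surjective_of_linearIndependent_mkQ_sq hres.2 hym hli
  have hnondeg (a : A) (ha : ∀ b, φ (a * b) = 0) : a = 0 :=
    eq_zero_of_forall_apply_mul_eq_zero ⟨j + 1, hj'⟩ hsoc (pow_le_torsionBySet hj' hsj) hφs ha
  refine ⟨dualComponent (φ ∘ₗ (MvPolynomial.aeval y).toLinearMap), isHomogeneous_dualComponent _,
    ?_, fun h2 => ⟨?_, ?_⟩,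
    RingHom.ker (MvPolynomial.aeval (R := k) y), ?_,
    ⟨Ideal.quotientKerAlgEquivOfSurjective hsurj⟩⟩
  · exact dualComponent_comp_aeval_mem_supported φ hj' hym
      (e := fun i => ∑ t ∈ Finset.range i, iaDelta k 𝔪 j t 1) hy
  · exact dualComponent_zero_eq_zero (by simpa using (hφ h2).1)
  · exact dualComponent_one_eq_zero (by simpa using (hφ h2).2)
  · exact Set.ext fun D =>
      (apolar_dualComponent_comp_aeval_eq_zero_iff hj' hym hsurj hnondeg D).symm
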